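/- Let f : ℝ → ℝ be continuously differentiable and let F be an antiderivative of f. Define W : Sym(n) → ℝ by W(A) = Σᵢ F(λᵢ(A)) = tr F(A), where λᵢ(A) are the eigenvalues of A and F(A) is the primary matrix function induced by F. Then W is a potential of the primary matrix function f : Sym(n) → Sym(n): for all A, H ∈ Sym(n), DW[A].H = ⟨f(A), H⟩ = tr(f(A)·H). -/

import Mathlib

open Matrix

attribute [local instance] Matrix.normedAddCommGroup Matrix.normedSpace

/-- The continuous linear map `H ↦ tr(Mᵀ H) = ⟨M, H⟩` on matrices. -/
noncomputable def frobeniusInnerCLM {n : ℕ} (M : Matrix (Fin n) (Fin n) ℝ) :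
    Matrix (Fin n) (Fin n) ℝ →L[ℝ] ℝ :=
  LinearMap.toContinuousLinearMap
    ((Matrix.traceLinearMap (Fin n) ℝ ℝ).comp (LinearMap.mulLeft ℝ Mᵀ))

lemma spec_aux {n : ℕ} {A : Matrix (Fin n) (Fin n) ℝ} (hA : A.IsHermitian) :
    ∃ U : Matrix (Fin n) (Fin n) ℝ, Uᵀ * U = 1 ∧ U * Uᵀ = 1 ∧
      A = U * diagonal hA.eigenvalues * Uᵀ := by
  refine ⟨(hA.eigenvectorUnitary : Matrix (Fin n) (Fin n) ℝ), ?_, ?_, ?_⟩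
  · have := Unitary.coe_star_mul_self hA.eigenvectorUnitary
    simpa [star_eq_conjTranspose, conjTranspose_eq_transpose_of_trivial] using this
  · have := Unitary.coe_mul_star_self hA.eigenvectorUnitary
    simpa [star_eq_conjTranspose, conjTranspose_eq_transpose_of_trivial] using this
  · have := hA.spectral_theorem
    rw [Unitary.conjStarAlgAut_apply] at this
    simpa [star_eq_conjTranspose, conjTranspose_eq_transpose_of_trivial, Function.comp_def] using this

lemma trace_aux {n : ℕ} (U V : Matrix (Fin n) (Fin n) ℝ) (x y : Fin n → ℝ) :
    trace ((U * diagonal x * Uᵀ) * (V * diagonal y * Vᵀ)) =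
      ∑ i, ∑ j, (Uᵀ * V) i j ^ 2 * (x i * y j) := by
  have : trace ((U * diagonal x * Uᵀ) * (V * diagonal y * Vᵀ)) =
      trace ((diagonal x * (Uᵀ * V)) * (diagonal y * (Uᵀ * V)ᵀ)) := by
    rw [show (U * diagonal x * Uᵀ) * (V * diagonal y * Vᵀ) =
      U * (diagonal x * Uᵀ * V * diagonal y * Vᵀ) by simp only [Matrix.mul_assoc], trace_mul_comm]
    simp only [transpose_mul, transpose_transpose, Matrix.mul_assoc]
  rw [this]
  generalize Uᵀ * V = P
  simp only [trace, diag_apply]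
  refine Finset.sum_congr rfl fun i _ => ?_
  rw [Matrix.mul_apply]
  refine Finset.sum_congr rfl fun j _ => ?_
  rw [diagonal_mul, diagonal_mul, transpose_apply]
  ring

lemma sq_aux {n : ℕ} (X : Matrix (Fin n) (Fin n) ℝ) (hX : X.IsSymm) :
    trace (X * X) ≤ (n : ℝ) ^ 2 * ‖X‖ ^ 2 := by
  have : ∀ i j, X i j * X j i ≤ ‖X‖ ^ 2 := fun i j => by
    rw [hX.apply i j, ← pow_two, ← sq_abs]
    have h := Matrix.norm_entry_le_entrywise_sup_norm X (i := i) (j := j)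
    rw [Real.norm_eq_abs] at h
    gcongr
  simp only [trace, diag_apply, Matrix.mul_apply]
  calc _ ≤ ∑ i : Fin n, ∑ j : Fin n, ‖X‖ ^ 2 :=
        Finset.sum_le_sum fun i _ => Finset.sum_le_sum fun j _ => this i j
    _ = _ := by simp; ring

lemma eig_aux {n : ℕ} {A : Matrix (Fin n) (Fin n) ℝ} (hA : A.IsHermitian) (i : Fin n) :
    |hA.eigenvalues i| ≤ n * ‖A‖ := by
  obtain ⟨U, h1, h2, h3⟩ := spec_aux hA
  have h := trace_aux U U hA.eigenvalues hA.eigenvalues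
  rw [← h3, h1] at h
  simp only [Matrix.one_apply, ite_pow, ite_mul, one_pow, one_mul, ne_eq, OfNat.ofNat_ne_zero,
    not_false_eq_true, zero_pow, zero_mul, Finset.sum_ite_eq, Finset.mem_univ, if_true] at h
  have hs := sq_aux A (by simpa [IsHermitian, IsSymm, conjTranspose_eq_transpose_of_trivial] using hA)
  rw [h] at hs
  have h5 := Finset.single_le_sum (f := fun i => hA.eigenvalues i * hA.eigenvalues i)
    (fun i _ => mul_self_nonneg _) (Finset.mem_univ i)
  refine abs_le_of_sq_le_sq ?_ (by positivity)
  nlinarith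

lemma scalar_aux (f F : ℝ → ℝ) (hf : ContDiff ℝ 1 f) (hF : ∀ t : ℝ, HasDerivAt F (f t) t) (R : ℝ) :
    ∃ K : ℝ, 0 ≤ K ∧ ∀ a b : ℝ, |a| ≤ R → |b| ≤ R →
      |F b - F a - f a * (b - a)| ≤ K * (b - a) ^ 2 := by
  obtain ⟨K, hK⟩ := (isCompact_Icc (a := -R) (b := R)).exists_bound_of_continuousOn
    (hf.continuous_deriv le_rfl).continuousOn
  refine ⟨|K|, abs_nonneg _, fun a b ha hb => ?_⟩
  rw [abs_le] at ha hb
  have hlip : ∀ t ∈ Set.Icc (-R) R, |f t - f a| ≤ |K| * |t - a| := fun t ht =>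
    (convex_Icc (-R) R).norm_image_sub_le_of_norm_hasDerivWithin_le
      (fun x _ => ((hf.differentiable one_ne_zero) x).hasDerivAt.hasDerivWithinAt)
      (fun x hx => (hK x hx).trans (le_abs_self K)) ha ht
  have hsub : Set.uIcc a b ⊆ Set.Icc (-R) R := Set.uIcc_subset_Icc ha hb
  have := (convex_uIcc a b).norm_image_sub_le_of_norm_hasDerivWithin_le
    (f := fun t => F t - f a * t) (f' := fun t => f t - f a * 1) (C := |K| * |b - a|)
    (fun x _ => ((hF x).sub ((hasDerivAt_id x).const_mul (f a))).hasDerivWithinAt)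
    (fun x hx => by
      rw [mul_one, Real.norm_eq_abs]
      refine (hlip x (hsub hx)).trans ?_
      have := Set.abs_sub_left_of_mem_uIcc hx
      gcongr) Set.left_mem_uIcc Set.right_mem_uIcc
  rw [Real.norm_eq_abs, Real.norm_eq_abs, mul_assoc, ← pow_two, sq_abs] at this
  convert this using 2
  ring

lemma main_aux {n : ℕ} (f F : ℝ → ℝ) (K : ℝ) (U V : Matrix (Fin n) (Fin n) ℝ)
    (a b : Fin n → ℝ) (hU : Uᵀ * U = 1) (hU' : U * Uᵀ = 1) (hV : Vᵀ * V = 1) (hV' : V * Vᵀ = 1)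
    (h : ∀ i j, |F (b j) - F (a i) - f (a i) * (b j - a i)| ≤ K * (b j - a i) ^ 2) :
    |∑ j, F (b j) - ∑ i, F (a i) - trace ((U * diagonal (f ∘ a) * Uᵀ) *
      (V * diagonal b * Vᵀ - U * diagonal a * Uᵀ))| ≤
    K * trace ((V * diagonal b * Vᵀ - U * diagonal a * Uᵀ) *
      (V * diagonal b * Vᵀ - U * diagonal a * Uᵀ)) := by
  have key : ∀ x y : Fin n → ℝ, trace ((U * diagonal x * Uᵀ) * (V * diagonal y * Vᵀ)) =
      ∑ i, ∑ j, (Uᵀ * V) i j ^ 2 * (x i * y j) := trace_aux U V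
  have one : ∀ {V : Matrix (Fin n) (Fin n) ℝ}, V * Vᵀ = 1 →
      V * diagonal (fun _ => (1:ℝ)) * Vᵀ = 1 := by
    intro V hV; simp [hV]
  have tr : ∀ {V : Matrix (Fin n) (Fin n) ℝ}, Vᵀ * V = 1 → ∀ y : Fin n → ℝ,
      trace (V * diagonal y * Vᵀ) = ∑ j, y j := by
    intro V hV y
    rw [trace_mul_comm, ← Matrix.mul_assoc, hV, Matrix.one_mul, trace_diagonal]
  have dd : ∀ {V : Matrix (Fin n) (Fin n) ℝ}, Vᵀ * V = 1 → ∀ x y : Fin n → ℝ,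
      trace ((V * diagonal x * Vᵀ) * (V * diagonal y * Vᵀ)) = ∑ j, x j * y j := by
    intro V hV x y
    rw [show (V * diagonal x * Vᵀ) * (V * diagonal y * Vᵀ) =
      V * (diagonal x * (Vᵀ * V) * diagonal y) * Vᵀ by simp only [Matrix.mul_assoc], hV,
      Matrix.mul_one, diagonal_mul_diagonal, tr hV]
  have c1 : ∀ y : Fin n → ℝ, ∑ j, y j = ∑ i, ∑ j, (Uᵀ * V) i j ^ 2 * y j := by
    intro y
    have := key (fun _ => 1) y
    rw [one hU', Matrix.one_mul, tr hV] at this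
    simpa using this
  have c2 : ∀ x : Fin n → ℝ, ∑ i, x i = ∑ i, ∑ j, (Uᵀ * V) i j ^ 2 * x i := by
    intro x
    have := key x (fun _ => 1)
    rw [one hV', Matrix.mul_one, tr hU] at this
    simpa using this
  have e1 : ∑ j, F (b j) - ∑ i, F (a i) - trace ((U * diagonal (f ∘ a) * Uᵀ) *
      (V * diagonal b * Vᵀ - U * diagonal a * Uᵀ)) =
      ∑ i, ∑ j, (Uᵀ * V) i j ^ 2 * (F (b j) - F (a i) - f (a i) * (b j - a i)) := by
    rw [Matrix.mul_sub, trace_sub, dd hU, key, c1 (fun j => F (b j)), c2 (fun i => F (a i)),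
      c2 (fun j => (f ∘ a) j * a j)]
    simp only [← Finset.sum_sub_distrib, Function.comp]
    refine Finset.sum_congr rfl fun i _ => Finset.sum_congr rfl fun j _ => ?_
    ring
  have e2 : trace ((V * diagonal b * Vᵀ - U * diagonal a * Uᵀ) *
      (V * diagonal b * Vᵀ - U * diagonal a * Uᵀ)) =
      ∑ i, ∑ j, (Uᵀ * V) i j ^ 2 * (b j - a i) ^ 2 := by
    rw [Matrix.mul_sub, Matrix.sub_mul, Matrix.sub_mul, trace_sub, trace_sub, trace_sub,
      trace_mul_comm (V * diagonal b * Vᵀ) (U * diagonal a * Uᵀ), dd hU, dd hV, key,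
      c1 (fun j => b j * b j), c2 (fun i => a i * a i)]
    simp only [← Finset.sum_sub_distrib]
    refine Finset.sum_congr rfl fun i _ => Finset.sum_congr rfl fun j _ => ?_
    ring
  rw [e1, e2, Finset.mul_sum]
  refine (Finset.abs_sum_le_sum_abs _ _).trans (Finset.sum_le_sum fun i _ => ?_)
  rw [Finset.mul_sum]
  refine (Finset.abs_sum_le_sum_abs _ _).trans (Finset.sum_le_sum fun j _ => ?_)
  rw [abs_mul, abs_of_nonneg (sq_nonneg _)]
  calc _ ≤ (Uᵀ * V) i j ^ 2 * (K * (b j - a i) ^ 2) :=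
        mul_le_mul_of_nonneg_left (h i j) (sq_nonneg _)
    _ = _ := by ring

/-- If `F' = f` with `f` continuously differentiable, then `W(A) = Σᵢ F(λᵢ(A))` is a
potential of the primary matrix function induced by `f` on the symmetric matrices:
`DW[A].H = ⟨f(A), H⟩` for all symmetric `A, H`. -/
theorem stmt_4 {n : ℕ} (f F : ℝ → ℝ) (hf : ContDiff ℝ 1 f)
    (hF : ∀ t : ℝ, HasDerivAt F (f t) t)
    (W : Matrix (Fin n) (Fin n) ℝ → ℝ)
    (hW : ∀ (A : Matrix (Fin n) (Fin n) ℝ) (hA : A.IsHermitian),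
      W A = ∑ i, F (hA.eigenvalues i))
    (fm : Matrix (Fin n) (Fin n) ℝ → Matrix (Fin n) (Fin n) ℝ)
    (hfm : ∀ (Q : Matrix (Fin n) (Fin n) ℝ) (d : Fin n → ℝ), Qᵀ * Q = 1 →
      fm (Qᵀ * Matrix.diagonal d * Q) = Qᵀ * Matrix.diagonal (f ∘ d) * Q) :
    ∀ A : Matrix (Fin n) (Fin n) ℝ, A.IsHermitian →
      HasFDerivWithinAt W (frobeniusInnerCLM (fm A))
        {X : Matrix (Fin n) (Fin n) ℝ | X.IsSymm} A := by
  intro A hA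
  have symm_iff : ∀ X : Matrix (Fin n) (Fin n) ℝ, X.IsSymm → X.IsHermitian := fun X hX => by
    simpa [IsHermitian, IsSymm, conjTranspose_eq_transpose_of_trivial] using hX
  have hAs : A.IsSymm := by
    simpa [IsHermitian, IsSymm, conjTranspose_eq_transpose_of_trivial] using hA
  obtain ⟨K, hK0, hK⟩ := scalar_aux f F hf hF (n * (‖A‖ + 1))
  obtain ⟨U, hU, hU', hUA⟩ := spec_aux hA
  have hfA : fm A = U * diagonal (f ∘ hA.eigenvalues) * Uᵀ := by
    have := hfm Uᵀ hA.eigenvalues (by simpa using hU')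
    rwa [transpose_transpose, ← hUA] at this
  have hfT : (fm A)ᵀ = fm A := by
    rw [hfA]; simp [transpose_mul, Matrix.mul_assoc]
  have bound : ∀ B : Matrix (Fin n) (Fin n) ℝ, B.IsSymm → ‖B - A‖ ≤ 1 →
      |W B - W A - frobeniusInnerCLM (fm A) (B - A)| ≤ K * n ^ 2 * ‖B - A‖ ^ 2 := by
    intro B hB hBA
    have hBh := symm_iff B hB
    obtain ⟨V, hV, hV', hVB⟩ := spec_aux hBh
    have hnB : ‖B‖ ≤ ‖A‖ + 1 := by
      have := norm_le_norm_add_norm_sub' B A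
      linarith
    have m := main_aux f F K U V hA.eigenvalues hBh.eigenvalues hU hU' hV hV' (fun i j =>
      hK _ _ ((eig_aux hA i).trans (by gcongr; linarith)) ((eig_aux hBh j).trans (by gcongr)))
    rw [← hVB, ← hUA, ← hfA, ← hW, ← hW] at m
    have e : frobeniusInnerCLM (fm A) (B - A) = trace (fm A * (B - A)) := by
      change trace ((fm A)ᵀ * (B - A)) = _
      rw [hfT]
    rw [e, mul_assoc]
    exact m.trans (mul_le_mul_of_nonneg_left (sq_aux _ (hB.sub hAs)) hK0)
  refine hasFDerivWithinAt_iff_isLittleO.mpr ?_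
  have hO : (fun B => W B - W A - frobeniusInnerCLM (fm A) (B - A))
      =O[nhdsWithin A {X : Matrix (Fin n) (Fin n) ℝ | X.IsSymm}] fun B => ‖B - A‖ ^ 2 := by
    refine Asymptotics.IsBigO.of_bound (K * n ^ 2) ?_
    filter_upwards [self_mem_nhdsWithin,
      mem_nhdsWithin_of_mem_nhds (Metric.closedBall_mem_nhds A one_pos)] with B hB hB1
    rw [Real.norm_eq_abs, Real.norm_of_nonneg (sq_nonneg _)]
    exact bound B hB (by simpa [dist_eq_norm] using hB1)
  refine hO.trans_isLittleO ?_
  exact (Asymptotics.isLittleO_pow_sub_sub A one_lt_two).mono nhdsWithin_le_nhds
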